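/- Every natural number N can be written as the sum of three terms of the sequence (⌊n²/7⌋)_{n∈ℕ}, i.e., there exist natural numbers A, B, C with N = ⌊A²/7⌋ + ⌊B²/7⌋ + ⌊C²/7⌋. -/

import Mathlib

lemma h_shift (A B : ℤ) (hA : 0 < A) : ∃ t : ℤ, -A ≤ 2 * (B + t * A) ∧ 2 * (B + t * A) ≤ A := by
  refine ⟨-((2 * B + A) / (2 * A)), ?_⟩
  have h1 := Int.mul_ediv_add_emod (2 * B + A) (2 * A)
  have h2 := Int.emod_nonneg (2 * B + A) (b := 2 * A) (by positivity)
  have h3 := Int.emod_lt_of_pos (2 * B + A) (b := 2 * A) (by positivity)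
  constructor <;> nlinarith

lemma bin_red (D : ℤ) (hD : 0 < D) : ∀ k : ℕ, ∀ A B C : ℤ, A ≤ k → 0 < A → A * C - B * B = D →
    ∃ p q r s : ℤ, p * s - q * r = 1 ∧ 0 < A * p ^ 2 + 2 * B * p * r + C * r ^ 2 ∧
      3 * (A * p ^ 2 + 2 * B * p * r + C * r ^ 2) ^ 2 ≤ 4 * D := by
  intro k
  induction k with
  | zero => intro A B C h1 h2; push_cast at h1; omega
  | succ k ih =>
    intro A B C h1 hA hdet
    by_cases hs : 3 * A ^ 2 ≤ 4 * D
    · exact ⟨1, 0, 0, 1, by norm_num, by simpa using hA, by simpa using hs⟩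
    · push Not at hs
      obtain ⟨t, ht1, ht2⟩ := h_shift A B hA
      have hdet' : (C + 2 * B * t + A * t ^ 2) * A - (-(B + t * A)) * (-(B + t * A)) = D := by
        linear_combination hdet
      have hB : 4 * ((B + t * A) * (B + t * A)) ≤ A ^ 2 := by nlinarith
      generalize hC' : C + 2 * B * t + A * t ^ 2 = C' at hdet'
      have hC0 : 0 < C' := by
        have : 0 < C' * A := by nlinarith [mul_self_nonneg (B + t * A)]
        exact pos_of_mul_pos_left this hA.le
      have hCA : C' < A := by
        have : C' * A < A * A := by nlinarith
        exact lt_of_mul_lt_mul_right this hA.le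
      obtain ⟨p, q, r, s, e1, e2, e3⟩ := ih C' (-(B + t * A)) A (by push_cast at h1; omega) hC0 hdet'
      have key : A * (-r + t * p) ^ 2 + 2 * B * (-r + t * p) * p + C * p ^ 2 =
          C' * p ^ 2 + 2 * (-(B + t * A)) * p * r + A * r ^ 2 := by
        rw [← hC']; ring
      refine ⟨-r + t * p, -s + t * q, p, q, by linear_combination e1, ?_, ?_⟩
      · rw [key]; exact e2
      · rw [key]; exact e3

lemma tern_red : ∀ k : ℕ, ∀ a b c d e f : ℤ, a ≤ k → 0 < a → 0 < a * b - f * f →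
    a * b * c + 2 * d * e * f - a * d ^ 2 - b * e ^ 2 - c * f ^ 2 = 1 →
    ∀ x y z : ℤ, ∃ u v w : ℤ, a * x ^ 2 + b * y ^ 2 + c * z ^ 2 + 2 * d * y * z + 2 * e * x * z
      + 2 * f * x * y = u ^ 2 + v ^ 2 + w ^ 2 := by
  intro k
  induction k with
  | zero => intro a b c d e f h1 h2; push_cast at h1; omega
  | succ k ih =>
    intro a b c d e f h1 ha hA hdet x y z
    have hG : (a * b - f * f) * (a * c - e * e) - (a * d - e * f) * (a * d - e * f) = a := by
      linear_combination a * hdet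
    obtain ⟨p, q, r, s, e1, e2, e3⟩ := bin_red a ha (a * b - f * f).toNat _ _ _
      (Int.self_le_toNat _) hA hG
    generalize hg : (a * b - f * f) * p ^ 2 + 2 * (a * d - e * f) * p * r
      + (a * c - e * e) * r ^ 2 = g at e2 e3
    -- new coordinates
    have hy : y = p * (s * y - q * z) + q * (p * z - r * y) := by linear_combination (-y) * e1
    have hz : z = r * (s * y - q * z) + s * (p * z - r * y) := by linear_combination (-z) * e1
    generalize s * y - q * z = Y at hy hz
    generalize p * z - r * y = Z at hy hz
    obtain ⟨t, ht1, ht2⟩ := h_shift a (f * p + e * r) ha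
    -- coefficients after the change of variables
    obtain ⟨b1, hb1⟩ : ∃ b1, b1 = b * p ^ 2 + 2 * d * p * r + c * r ^ 2 := ⟨_, rfl⟩
    obtain ⟨c1, hc1⟩ : ∃ c1, c1 = b * q ^ 2 + 2 * d * q * s + c * s ^ 2 := ⟨_, rfl⟩
    obtain ⟨d1, hd1⟩ : ∃ d1, d1 = b * p * q + d * (p * s + q * r) + c * r * s := ⟨_, rfl⟩
    obtain ⟨f1, hf1⟩ : ∃ f1, f1 = f * p + e * r := ⟨_, rfl⟩
    obtain ⟨e1', he1⟩ : ∃ e1', e1' = f * q + e * s := ⟨_, rfl⟩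
    have hdet1 : a * b1 * c1 + 2 * d1 * e1' * f1 - a * d1 ^ 2 - b1 * e1' ^ 2 - c1 * f1 ^ 2 = 1 := by
      have : a * b1 * c1 + 2 * d1 * e1' * f1 - a * d1 ^ 2 - b1 * e1' ^ 2 - c1 * f1 ^ 2 =
        (a * b * c + 2 * d * e * f - a * d ^ 2 - b * e ^ 2 - c * f ^ 2) * (p * s - q * r) ^ 2 := by
        subst hb1 hc1 hd1 hf1 he1; ring
      rw [this, hdet, e1]; norm_num
    have hg1 : a * b1 - f1 * f1 = g := by
      rw [← hg]; subst hb1 hf1; ring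
    have hform : a * x ^ 2 + b * y ^ 2 + c * z ^ 2 + 2 * d * y * z + 2 * e * x * z + 2 * f * x * y
        = a * x ^ 2 + b1 * Y ^ 2 + c1 * Z ^ 2 + 2 * d1 * Y * Z + 2 * e1' * x * Z + 2 * f1 * x * Y := by
      subst hb1 hc1 hd1 hf1 he1; rw [hy, hz]; ring
    rw [hform]
    rw [← hf1] at ht1 ht2
    clear hform hy hz hb1 hc1 hd1 hf1 he1 hg hG hA hdet e1
    by_cases ha1 : a = 1
    · subst ha1
      have hgg : g = 1 := by nlinarith
      refine ⟨x + f1 * Y + e1' * Z, Y + (d1 - e1' * f1) * Z, Z, ?_⟩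
      have hb : b1 = 1 + f1 * f1 := by linarith
      subst hb
      linear_combination Z ^ 2 * hdet1
    · have ha2 : 2 ≤ a := by omega
      obtain ⟨b2, hb2⟩ : ∃ b2, b2 = b1 + 2 * f1 * t + a * t ^ 2 := ⟨_, rfl⟩
      obtain ⟨f2, hf2⟩ : ∃ f2, f2 = f1 + t * a := ⟨_, rfl⟩
      have hg2 : a * b2 - f2 * f2 = g := by rw [← hg1]; subst hb2 hf2; ring
      rw [← hf2] at ht1 ht2
      have hff : 4 * (f2 * f2) ≤ a * a := by nlinarith
      have hb0 : 0 < b2 := by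
        have : 0 < a * b2 := by nlinarith [mul_self_nonneg f2]
        exact pos_of_mul_pos_right this ha.le
      have hga : 4 * g < 3 * (a * a) := by
        by_contra hcon
        push Not at hcon
        have h4 : 3 * (2 * a) ≤ 4 * g := by nlinarith
        nlinarith
      have hba : b2 < a := by
        have : a * b2 < a * a := by nlinarith
        exact lt_of_mul_lt_mul_left this ha.le
      obtain ⟨u, v, w, huvw⟩ := ih b2 a c1 e1' (d1 + t * e1') f2 (by push_cast at h1; omega) hb0
        (by linarith) (by rw [← hdet1]; subst hb2 hf2; ring) Y (x - t * Y) Z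
      exact ⟨u, v, w, by rw [← huvw]; subst hb2 hf2; ring⟩

lemma of_square (n b k a : ℤ) (hb : 0 < b) (hm : 0 < b * n - 1) (h : k ^ 2 + b = a * (b * n - 1)) :
    ∃ u v w : ℤ, n = u ^ 2 + v ^ 2 + w ^ 2 := by
  have ha : 0 < a := by
    have : 0 < a * (b * n - 1) := by nlinarith [sq_nonneg k]
    exact pos_of_mul_pos_left this hm.le
  obtain ⟨u, v, w, h'⟩ := tern_red a.toNat a (b * n - 1) n 0 1 k (Int.self_le_toNat _) ha
    (by linarith) (by linear_combination (-n) * h) 0 0 1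
  exact ⟨u, v, w, by rw [← h']; ring⟩

open NumberTheorySymbols in
lemma sq_of_jac (p : ℕ) (hp : p.Prime) (b : ℤ) (h : J(-b | p) = 1) :
    ∃ k a : ℤ, k ^ 2 + b = a * p := by
  haveI : Fact p.Prime := ⟨hp⟩
  obtain ⟨r, hr⟩ := ZMod.isSquare_of_jacobiSym_eq_one h
  obtain ⟨k, rfl⟩ := ZMod.intCast_surjective r
  have : (p : ℤ) ∣ k ^ 2 + b := by
    rw [← ZMod.intCast_zmod_eq_zero_iff_dvd]
    push_cast at hr ⊢
    linear_combination -hr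
  obtain ⟨a, ha⟩ := this
  exact ⟨k, a, by rw [ha]; ring⟩

open NumberTheorySymbols in
lemma three_two (n : ℕ) (hn : n % 4 = 2) : ∃ u v w : ℤ, (n : ℤ) = u ^ 2 + v ^ 2 + w ^ 2 := by
  have hcop : (n - 1).Coprime (4 * n) := by
    apply Nat.Coprime.mul_right
    · have : (n - 1) % 4 = 1 := by omega
      rw [Nat.Coprime, Nat.gcd_comm, Nat.gcd_rec, this]; norm_num
    · exact (Nat.coprime_self_sub_left (by omega)).2 (by simp)
  obtain ⟨p, hpn, hp, hmod⟩ := Nat.forall_exists_prime_gt_and_modEq n (q := 4 * n) (by omega) hcop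
  obtain ⟨v, hv⟩ := (Nat.modEq_iff_dvd' (by omega)).1 hmod.symm
  have hpe : p + 1 = (4 * v + 1) * n := by
    have : p = 4 * n * v + (n - 1) := by omega
    rw [this]; rw [add_assoc, Nat.sub_add_cancel (by omega)]; ring
  have hp4 : p % 4 = 1 := by
    have : p + 1 = 4 * (v * n) + n := by rw [hpe]; ring
    omega
  have hb : Odd (4 * v + 1) := ⟨2 * v, by ring⟩
  have hpo : Odd p := Nat.odd_iff.2 (by omega)
  have hJ : J(-((4 * v + 1 : ℕ) : ℤ) | p) = 1 := by
    rw [jacobiSym.neg _ hpo, ZMod.χ₄_nat_one_mod_four hp4, one_mul,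
      jacobiSym.quadratic_reciprocity_one_mod_four (by omega) hpo]
    have h1 : J((p : ℤ) | 4 * v + 1) = J(-1 | 4 * v + 1) := by
      apply jacobiSym.mod_left'
      apply Int.ModEq.symm
      rw [Int.modEq_iff_dvd]
      exact ⟨n, by push_cast; have := congrArg (Nat.cast : ℕ → ℤ) hpe; push_cast at this; linarith⟩
    rw [h1, jacobiSym.at_neg_one hb, ZMod.χ₄_nat_one_mod_four (by omega)]
  obtain ⟨k, a, hk⟩ := sq_of_jac p hp _ hJ
  have hpe' : ((4 * v + 1 : ℕ) : ℤ) * n - 1 = p := by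
    have := congrArg (Nat.cast : ℕ → ℤ) hpe; push_cast at this ⊢; linarith
  refine of_square n ((4 * v + 1 : ℕ) : ℤ) k a (by positivity) ?_ ?_
  · rw [hpe']; exact_mod_cast hp.pos
  · rw [hpe']; exact hk

open NumberTheorySymbols in
lemma three_one (n : ℕ) (hn : n % 4 = 1) : ∃ u v w : ℤ, (n : ℤ) = u ^ 2 + v ^ 2 + w ^ 2 := by
  obtain ⟨m, hm⟩ : ∃ m, 2 * m + 1 = 3 * n := ⟨(3 * n - 1) / 2, by omega⟩
  have hcop : m.Coprime (4 * n) := by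
    apply Nat.Coprime.mul_right
    · have : Nat.Coprime m 2 := Nat.Coprime.symm (Nat.coprime_two_left.2 (Nat.odd_iff.2 (by omega)))
      exact Nat.Coprime.mul_right this this
    · have h1 : m.gcd n ∣ 2 * m + 1 := hm ▸ ((Nat.gcd_dvd_right m n).mul_left 3)
      exact Nat.dvd_one.1 ((Nat.dvd_add_right ((Nat.gcd_dvd_left m n).mul_left 2)).1 h1)
  obtain ⟨p, hpn, hp, hmod⟩ := Nat.forall_exists_prime_gt_and_modEq (2 * n) (q := 4 * n)
    (by omega) hcop
  obtain ⟨v, hv⟩ := (Nat.modEq_iff_dvd' (by omega)).1 hmod.symm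
  have hp1 : p = 4 * (n * v) + m := by rw [← mul_assoc]; omega
  have hpe : 2 * p + 1 = (8 * v + 3) * n := by
    have : (8 * v + 3) * n = 8 * (n * v) + 3 * n := by ring
    omega
  have hb : Odd (8 * v + 3) := ⟨4 * v + 1, by ring⟩
  have hpo : Odd p := Nat.odd_iff.2 (by omega)
  have hJ1 : J((p : ℤ) | 8 * v + 3) = 1 := by
    have h1 : J(((-2) * p : ℤ) | 8 * v + 3) = J(1 | 8 * v + 3) := by
      apply jacobiSym.mod_left'
      apply Int.ModEq.symm
      rw [Int.modEq_iff_dvd]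
      exact ⟨-n, by push_cast; have := congrArg (Nat.cast : ℕ → ℤ) hpe; push_cast at this; linarith⟩
    have h2 : J(-2 | 8 * v + 3) = 1 := by
      rw [jacobiSym.at_neg_two hb, ZMod.χ₈'_nat_eq_if_mod_eight]
      rw [if_neg (by omega), if_pos (by omega)]
    rw [jacobiSym.mul_left, h2, one_mul, jacobiSym.one_left] at h1
    exact h1
  have hJ : J(-((8 * v + 3 : ℕ) : ℤ) | p) = 1 := by
    rw [jacobiSym.neg _ hpo]
    have : p % 4 = 1 ∨ p % 4 = 3 := by omega
    rcases this with h | h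
    · rw [ZMod.χ₄_nat_one_mod_four h, one_mul,
        jacobiSym.quadratic_reciprocity_one_mod_four' hb h, hJ1]
    · rw [ZMod.χ₄_nat_three_mod_four h,
        jacobiSym.quadratic_reciprocity_three_mod_four (by omega) h, hJ1]; norm_num
  obtain ⟨k, a, hk⟩ := sq_of_jac p hp _ hJ
  have hpe' : ((8 * v + 3 : ℕ) : ℤ) * n - 1 = 2 * p := by
    have := congrArg (Nat.cast : ℕ → ℤ) hpe; push_cast at this ⊢; linarith
  -- adjust the parity of the root
  obtain ⟨k', a', hk', hodd⟩ : ∃ k' a' : ℤ, k' ^ 2 + ((8 * v + 3 : ℕ) : ℤ) = a' * p ∧ k' % 2 = 1 := by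
    rcases Int.emod_two_eq_zero_or_one k with h | h
    · refine ⟨k + p, a + 2 * k + p, by linear_combination hk, ?_⟩
      obtain ⟨j, hj⟩ := hpo
      omega
    · exact ⟨k, a, hk, h⟩
  have hev : a' % 2 = 0 := by
    obtain ⟨i, hi⟩ : ∃ i, k' = 2 * i + 1 := ⟨k' / 2, by omega⟩
    obtain ⟨j, hj⟩ := hpo
    rcases Int.emod_two_eq_zero_or_one a' with h | h
    · exact h
    · exfalso
      obtain ⟨l, hl⟩ : ∃ l, a' = 2 * l + 1 := ⟨a' / 2, by omega⟩
      subst hi hl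
      rw [hj] at hk'
      push_cast at hk'
      have : 2 * (2 * i ^ 2 + 2 * i + 4 * (v : ℤ) + 2 - (2 * l * j + l + j)) = 1 := by
        linear_combination hk'
      omega
  obtain ⟨l, rfl⟩ : ∃ l, a' = 2 * l := ⟨a' / 2, by omega⟩
  refine of_square n ((8 * v + 3 : ℕ) : ℤ) k' l (by positivity) ?_ ?_
  · rw [hpe']; have := hp.pos; positivity
  · rw [hpe']; linear_combination hk'

lemma three_nat (n : ℕ) (hn : n % 4 = 1 ∨ n % 4 = 2) : ∃ u v w : ℕ, n = u ^ 2 + v ^ 2 + w ^ 2 := by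
  obtain ⟨u, v, w, h⟩ := hn.elim (three_one n) (three_two n)
  refine ⟨u.natAbs, v.natAbs, w.natAbs, ?_⟩
  zify
  simpa using h

lemma sq_mod7 (a : ℕ) : a ^ 2 % 7 = 0 ∨ a ^ 2 % 7 = 1 ∨ a ^ 2 % 7 = 2 ∨ a ^ 2 % 7 = 4 := by
  have : a % 7 < 7 := Nat.mod_lt _ (by norm_num)
  rw [Nat.pow_mod]
  interval_cases a % 7 <;> simp

theorem stmt_2 (N : ℕ) :
    ∃ A B C : ℕ, N = A ^ 2 / 7 + B ^ 2 / 7 + C ^ 2 / 7 := by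
  have : ((7 * N + 4) % 4 = 1 ∨ (7 * N + 4) % 4 = 2) ∨
      ((7 * N + 6) % 4 = 1 ∨ (7 * N + 6) % 4 = 2) := by omega
  rcases this with h | h
  all_goals
    obtain ⟨u, v, w, e⟩ := three_nat _ h
    refine ⟨u, v, w, ?_⟩
    have hu := sq_mod7 u
    have hv := sq_mod7 v
    have hw := sq_mod7 w
    generalize u ^ 2 = U at *
    generalize v ^ 2 = V at *
    generalize w ^ 2 = W at *
    omega
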